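/- If a domain U ⊆ ℂⁿ is holomorphically convex then U is a domain of holomorphy. -/

import Mathlib

open Set Metric Filter Topology

/-- A function `f`, holomorphic on the open set `U ⊆ ℂⁿ`, extends holomorphically to a point
`a`: there is a connected open neighbourhood `V` of `a` and a holomorphic `g` on `V` agreeing
with `f` on a nonempty open subset of `U ∩ V`. -/
def ExtendsHolomorphicallyTo {n : ℕ} (U : Set (Fin n → ℂ)) (f : (Fin n → ℂ) → ℂ)
    (a : Fin n → ℂ) : Prop :=
  ∃ V : Set (Fin n → ℂ), IsOpen V ∧ IsConnected V ∧ a ∈ V ∧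
    ∃ g : (Fin n → ℂ) → ℂ, DifferentiableOn ℂ g V ∧
      ∃ W : Set (Fin n → ℂ), IsOpen W ∧ W.Nonempty ∧ W ⊆ U ∩ V ∧ Set.EqOn f g W

/-- `U ⊆ ℂⁿ` is a domain of holomorphy: it is a domain (connected open set) and there exists a
holomorphic function on `U` which does not extend holomorphically to any point of `Uᶜ`. -/
def IsDomainOfHolomorphy {n : ℕ} (U : Set (Fin n → ℂ)) : Prop :=
  IsOpen U ∧ IsConnected U ∧
    ∃ f : (Fin n → ℂ) → ℂ, DifferentiableOn ℂ f U ∧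
      ∀ a ∈ Uᶜ, ¬ ExtendsHolomorphicallyTo U f a

/-- The holomorphically convex hull of `K` in `U`:
`K̂ = {z ∈ U : ‖f z‖ ≤ sup_{w ∈ K} ‖f w‖ for every f holomorphic on U}`. -/
def holConvexHull {n : ℕ} (U K : Set (Fin n → ℂ)) : Set (Fin n → ℂ) :=
  {z ∈ U | ∀ f : (Fin n → ℂ) → ℂ, DifferentiableOn ℂ f U → ‖f z‖ ≤ ⨆ w : K, ‖f w‖}

/-- `U` is holomorphically convex: the holomorphically convex hull of every compact subset of `U`
is compact. -/
def HolomorphicallyConvex {n : ℕ} (U : Set (Fin n → ℂ)) : Prop :=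
  ∀ K : Set (Fin n → ℂ), K ⊆ U → IsCompact K → IsCompact (holConvexHull U K)

/-!
Let `U ≠ ℂⁿ`, let `D` be a countable dense subset of `ℂⁿ` and attach to every `c ∈ D ∩ U` the
largest ball around `c` contained in `U`. Such a ball comes arbitrarily close to `Uᶜ`, so it is not
contained in the compact hull `K̂` of any compact `K ⊆ U`, and at a point `z` of the ball outside
`K̂` there is a holomorphic `p` on `U` with `p z = 1` which is as small as desired on `K`. Hence, by
Baire's theorem in the space of holomorphic functions on `U`, some holomorphic `f` is unbounded on
each of the countably many balls.

If `f` extended to a point outside `U`, by a function `g` on `V`, then `f = g` on a component `C` of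
`U ∩ V`, and `C` has a limit point `p ∈ V \ U`. For `c ∈ C` close to `p` the largest ball around `c`
has radius at most `‖c - p‖`, hence lies in `C` and near `p`, where `g` is bounded. So `f` would be
bounded on the ball around a point of `D`.
-/

section ComplexAnalysis

variable {E F : Type*} [NormedAddCommGroup E] [NormedSpace ℂ E] [NormedAddCommGroup F]
  [NormedSpace ℂ F]

/-- The space `𝒪(U, F)` of holomorphic maps from `U` to `F`, as a subspace of `C(U, F)`, from which
it takes the compact-open topology. Holomorphy is that of some extension by arbitrary values to all
of `E`, since `DifferentiableOn` is a property of functions on `E`. -/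
def holomorphicMaps (F : Type*) [NormedAddCommGroup F] [NormedSpace ℂ F] (U : Set E) :
    Submodule ℂ C(U, F) where
  carrier := {φ | ∃ f : E → F, DifferentiableOn ℂ f U ∧ U.domRestrict f = φ}
  zero_mem' := ⟨0, differentiableOn_const 0, rfl⟩
  add_mem' := by
    rintro φ ψ ⟨f, hf, hfφ⟩ ⟨g, hg, hgψ⟩
    exact ⟨f + g, hf.add hg, by rw [ContinuousMap.coe_add, ← hfφ, ← hgψ]; rfl⟩
  smul_mem' := by
    rintro c φ ⟨f, hf, hfφ⟩
    exact ⟨c • f, hf.const_smul c, by rw [ContinuousMap.coe_smul, ← hfφ]; rfl⟩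

variable {ι : Type*} {l : Filter ι} {u : ι → E → F}

theorem uniformCauchySeqOn_fderiv_ball {x : E} {r R : ℝ} (hrR : r < R)
    (hu : ∀ᶠ n in l, DifferentiableOn ℂ (u n) (ball x R))
    (hcauchy : UniformCauchySeqOn u l (ball x R)) :
    UniformCauchySeqOn (fun n => fderiv ℂ (u n)) l (ball x r) := by
  intro V hV
  obtain ⟨ε, hε, hεV⟩ := mem_uniformity_dist.1 hV
  have hδ : 0 < R - r := sub_pos.2 hrR
  filter_upwards [hcauchy _ (dist_mem_uniformity (by positivity : 0 < ε / 4 * (R - r))),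
    hu.prod_mk hu] with ⟨m, n⟩ hclose ⟨hm, hn⟩ y hy
  have hball : ball y (R - r) ⊆ ball x R :=
    ball_subset_ball' (by linarith [mem_ball.1 hy])
  have hyR : y ∈ ball x R := hball (mem_ball_self hδ)
  have hmaps : MapsTo (u m - u n) (ball y (R - r))
      (closedBall ((u m - u n) y) (ε / 2 * (R - r))) := by
    intro w hw
    have hw' : ‖u m w - u n w‖ < _ := dist_eq_norm (u m w) _ ▸ hclose w (hball hw)
    have hy' : ‖u m y - u n y‖ < _ := dist_eq_norm (u m y) _ ▸ hclose y hyR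
    rw [mem_closedBall, dist_eq_norm]
    refine (norm_sub_le _ _).trans ?_
    simp only [Pi.sub_apply]
    linarith
  apply hεV
  calc dist (fderiv ℂ (u m) y) (fderiv ℂ (u n) y)
      = ‖fderiv ℂ (u m - u n) y‖ := by
        rw [dist_eq_norm, fderiv_sub (hm.differentiableAt (isOpen_ball.mem_nhds hyR))
          (hn.differentiableAt (isOpen_ball.mem_nhds hyR))]
    _ ≤ ε / 2 * (R - r) / (R - r) :=
        Complex.norm_fderiv_le_div_of_mapsTo_ball ((hm.sub hn).mono hball) hmaps hδ
    _ < ε := by rw [mul_div_cancel_right₀ _ hδ.ne']; exact half_lt_self hε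

variable [CompleteSpace F]

theorem differentiableAt_of_tendstoUniformlyOn [l.NeBot] {f : E → F} {s : Set E} {x : E}
    (hs : s ∈ 𝓝 x) (hu : ∀ᶠ n in l, DifferentiableOn ℂ (u n) s)
    (huf : TendstoUniformlyOn u f l s) : DifferentiableAt ℂ f x := by
  obtain ⟨R, hR, hRs⟩ := Metric.mem_nhds_iff.1 hs
  have hu' : ∀ᶠ n in l, DifferentiableOn ℂ (u n) (ball x R) := hu.mono fun _ h => h.mono hRs
  have hcauchy := uniformCauchySeqOn_fderiv_ball (half_lt_self hR) hu'
    (huf.mono hRs).uniformCauchySeqOn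
  have hlim : ∀ y ∈ ball x (R / 2), ∃ D, Tendsto (fun n => fderiv ℂ (u n) y) l (𝓝 D) :=
    fun y hy => CompleteSpace.complete (hcauchy.cauchy_map hy)
  choose! f' hf' using hlim
  have hnhds : ball x (R / 2) ∈ 𝓝 x := ball_mem_nhds x (half_pos hR)
  have hderiv : TendstoUniformlyOnFilter (fun n => fderiv ℂ (u n)) f' l (𝓝 x) :=
    (tendstoUniformlyOn_iff_tendstoUniformlyOnFilter.1
      (hcauchy.tendstoUniformlyOn_of_tendsto hf')).mono_right (le_principal_iff.2 hnhds)
  refine (hasFDerivAt_of_tendstoUniformlyOnFilter (f := u) hderiv ?_ ?_).differentiableAt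
  · filter_upwards [hu'.prod_mk (ball_mem_nhds x hR)] with p hp
    exact (hp.1.differentiableAt (isOpen_ball.mem_nhds hp.2)).hasFDerivAt
  · filter_upwards [hs] with y hy using huf.tendsto_at hy

theorem differentiableOn_of_tendstoLocallyUniformlyOn [LocallyCompactSpace E] [l.NeBot]
    {f : E → F} {U : Set E} (hU : IsOpen U) (hu : ∀ᶠ n in l, DifferentiableOn ℂ (u n) U)
    (huf : TendstoLocallyUniformlyOn u f l U) : DifferentiableOn ℂ f U := by
  intro x hx
  obtain ⟨K, hK, hxK, hKU⟩ := exists_compact_subset hU hx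
  exact (differentiableAt_of_tendstoUniformlyOn (mem_interior_iff_mem_nhds.1 hxK)
    (hu.mono fun _ h => h.mono hKU)
    ((tendstoLocallyUniformlyOn_iff_forall_isCompact hU).1 huf K hKU hK)).differentiableWithinAt

theorem isClosed_holomorphicMaps [LocallyCompactSpace E] {U : Set E} (hU : IsOpen U) :
    IsClosed (holomorphicMaps F U : Set C(U, F)) := by
  have : LocallyCompactSpace U := hU.locallyCompactSpace
  refine isClosed_of_closure_subset fun φ hφ => ?_
  have : (𝓝[(holomorphicMaps F U : Set C(U, F))] φ).NeBot := mem_closure_iff_nhdsWithin_neBot.1 hφ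
  let ext (ψ : C(U, F)) : E → F := Function.extend (↑) ψ 0
  have hext (ψ : C(U, F)) : U.domRestrict (ext ψ) = ψ :=
    funext fun z => Subtype.val_injective.extend_apply _ _ z
  refine ⟨ext φ, ?_, hext φ⟩
  refine differentiableOn_of_tendstoLocallyUniformlyOn
    (l := 𝓝[(holomorphicMaps F U : Set C(U, F))] φ) (u := ext) hU ?_ ?_
  · filter_upwards [self_mem_nhdsWithin] with ψ ⟨g, hg, hgψ⟩
    exact hg.congr fun z hz => congrFun ((hext ψ).trans hgψ.symm) ⟨z, hz⟩
  · rw [tendstoLocallyUniformlyOn_iff_tendstoLocallyUniformly_comp_coe]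
    convert ContinuousMap.tendsto_iff_tendstoLocallyUniformly.1
      (tendsto_id.mono_left nhdsWithin_le_nhds :
        Tendsto id (𝓝[(holomorphicMaps F U : Set C(U, F))] φ) (𝓝 φ)) using 1
    · exact funext hext
    · exact hext φ

theorem baireSpace_holomorphicMaps [ProperSpace E] {U : Set E} (hU : IsOpen U) :
    BaireSpace (holomorphicMaps F U) := by
  have : LocallyCompactSpace U := hU.locallyCompactSpace
  have := (isClosed_holomorphicMaps (F := F) hU).isCompletelyPseudoMetrizableSpace
  exact BaireSpace.of_completelyPseudoMetrizable

-- Restricting to the complex line through two points reduces to the identity theorem in `ℂ`.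
theorem eqOn_ball_of_eventuallyEq {f g : E → F} {c z : E} {r : ℝ}
    (hf : DifferentiableOn ℂ f (ball c r)) (hg : DifferentiableOn ℂ g (ball c r))
    (hz : z ∈ ball c r) (hfg : f =ᶠ[𝓝 z] g) : EqOn f g (ball c r) := by
  intro w hw
  let line (t : ℂ) : E := z + t • (w - z)
  have hline : Differentiable ℂ line := by fun_prop
  have hline₀ : line 0 = z := by simp [line]
  have hline₁ : line 1 = w := by simp [line]
  have hconvex : Convex ℝ (line ⁻¹' ball c r) :=
    ((convex_ball c r).translate_preimage_right z).linear_preimage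
      ((LinearMap.toSpanSingleton ℂ E (w - z)).restrictScalars ℝ)
  have hopen : IsOpen (line ⁻¹' ball c r) := isOpen_ball.preimage hline.continuous
  have hanalytic {h : E → F} (hh : DifferentiableOn ℂ h (ball c r)) :
      AnalyticOnNhd ℂ (h ∘ line) (line ⁻¹' ball c r) :=
    (hh.comp hline.differentiableOn fun _ ht => ht).analyticOnNhd hopen
  have hev : f ∘ line =ᶠ[𝓝 0] g ∘ line :=
    hfg.comp_tendsto (by simpa only [hline₀] using hline.continuous.tendsto 0)
  have heq : f (line 1) = g (line 1) :=
    (hanalytic hf).eqOn_of_preconnected_of_eventuallyEq (hanalytic hg) hconvex.isPreconnected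
      (mem_preimage.2 (hline₀ ▸ hz)) hev (mem_preimage.2 (hline₁ ▸ hw))
  rwa [hline₁] at heq

theorem eqOn_of_isPreconnected_of_eventuallyEq {f g : E → F} {U : Set E} {z : E}
    (hU : IsOpen U) (hUc : IsPreconnected U) (hf : DifferentiableOn ℂ f U)
    (hg : DifferentiableOn ℂ g U) (hz : z ∈ U) (hfg : f =ᶠ[𝓝 z] g) : EqOn f g U := by
  suffices U ⊆ {w | f =ᶠ[𝓝 w] g} from fun w hw => (this hw).self_of_nhds
  refine hUc.subset_of_closure_inter_subset isOpen_setOfPred_eventually_nhds ⟨z, hz, hfg⟩ ?_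
  rintro w ⟨hw, hwU⟩
  obtain ⟨r, hr, hrU⟩ := Metric.isOpen_iff.1 hU w hwU
  obtain ⟨y, hy, hyfg⟩ := mem_closure_iff.1 hw (ball w r) isOpen_ball (mem_ball_self hr)
  exact (eqOn_ball_of_eventuallyEq (hf.mono hrU) (hg.mono hrU) hy hyfg).eventuallyEq_of_mem
    (ball_mem_nhds w hr)

theorem eqOn_connectedComponentIn_of_eventuallyEq {f g : E → F} {U V : Set E} {z : E}
    (hU : IsOpen U) (hV : IsOpen V) (hf : DifferentiableOn ℂ f U) (hg : DifferentiableOn ℂ g V)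
    (hz : z ∈ U ∩ V) (hfg : f =ᶠ[𝓝 z] g) : EqOn f g (connectedComponentIn (U ∩ V) z) := by
  have hsub := connectedComponentIn_subset (U ∩ V) z
  exact eqOn_of_isPreconnected_of_eventuallyEq (hU.inter hV).connectedComponentIn
    isPreconnected_connectedComponentIn (hf.mono (hsub.trans inter_subset_left))
    (hg.mono (hsub.trans inter_subset_right)) (mem_connectedComponentIn hz) hfg

end ComplexAnalysis

section Baire

variable {X 𝕜 : Type*} [TopologicalSpace X] [NontriviallyNormedField 𝕜]
  {A : Submodule 𝕜 C(X, 𝕜)} {B : Set X}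

/-- `A` *peaks on* `B`: for every compact `K` there is a point of `B` at which suitable members of
`A` take the value `1` while being arbitrarily small on `K`. The point may depend on `K` but not on
the required smallness. -/
def PeaksOn (A : Submodule 𝕜 C(X, 𝕜)) (B : Set X) : Prop :=
  ∀ K, IsCompact K → ∃ z ∈ B, ∀ ε > 0, ∃ p ∈ A, p z = 1 ∧ ∀ x ∈ K, ‖p x‖ < ε

theorem PeaksOn.dense_exists_lt_norm (h : PeaksOn A B) (M : ℝ) :
    Dense {φ : A | ∃ z ∈ B, M < ‖φ.1 z‖} := by
  intro φ
  have hbasis := IsInducing.subtypeVal.basis_nhds (x := φ)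
    (nhds_basis_uniformity' uniformity_basis_dist.compactConvergenceUniformity)
  refine (mem_closure_iff_nhds_basis hbasis).2 ?_
  rintro ⟨K, ε⟩ ⟨hK, hε⟩
  obtain ⟨z, hzB, hz⟩ := h K hK
  obtain ⟨c, hc⟩ := NormedField.exists_lt_norm 𝕜 (M + ‖φ.1 z‖)
  have hc₀ : 0 < ‖c‖ + 1 := by positivity
  obtain ⟨p, hpA, hpz, hpK⟩ := hz (ε / (‖c‖ + 1)) (div_pos hε hc₀)
  refine ⟨φ + c • ⟨p, hpA⟩, ⟨z, hzB, ?_⟩, fun x hx => ?_⟩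
  · have : ‖c‖ ≤ ‖φ.1 z + c‖ + ‖φ.1 z‖ := by simpa using norm_sub_le (φ.1 z + c) (φ.1 z)
    simpa [hpz] using (by linarith : M < ‖φ.1 z + c‖)
  · have : ‖c‖ * ‖p x‖ < ε := calc
      ‖c‖ * ‖p x‖ ≤ (‖c‖ + 1) * ‖p x‖ := by gcongr; exact le_add_of_nonneg_right zero_le_one
      _ < ε := (lt_div_iff₀' hc₀).1 (hpK x hx)
    simpa [dist_eq_norm] using this

theorem PeaksOn.eventually_residual_not_isBounded_image (h : PeaksOn A B) :
    ∀ᶠ φ in residual A, ¬ Bornology.IsBounded (φ.1 '' B) := by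
  have hunbounded (M : ℕ) : ∀ᶠ φ in residual A, ∃ z ∈ B, M < ‖φ.1 z‖ := by
    refine residual_of_dense_open ?_ (h.dense_exists_lt_norm M)
    simp only [ofPred_exists, ofPred_and]
    exact isOpen_iUnion fun z => isOpen_const.inter (isOpen_lt continuous_const
      ((continuous_eval_const z).comp continuous_subtype_val).norm)
  filter_upwards [eventually_countable_forall.2 hunbounded] with φ hφ hbdd
  obtain ⟨C, hC⟩ := isBounded_iff_forall_norm_le.1 hbdd
  obtain ⟨M, hM⟩ := exists_nat_gt C
  obtain ⟨z, hzB, hz⟩ := hφ M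
  exact (hM.trans hz).not_ge (hC _ (mem_image_of_mem _ hzB))

end Baire

theorem exists_mem_diff_mem_closure_connectedComponentIn {X : Type*} [TopologicalSpace X]
    [LocallyConnectedSpace X] {U V : Set X} (hU : IsOpen U) (hV : IsOpen V)
    (hVc : IsPreconnected V) {a w : X} (ha : a ∈ V \ U) (hw : w ∈ U ∩ V) :
    ∃ p ∈ V \ U, p ∈ closure (connectedComponentIn (U ∩ V) w) := by
  set C := connectedComponentIn (U ∩ V) w
  have hCUV : C ⊆ U ∩ V := connectedComponentIn_subset _ _
  have hwC : w ∈ C := mem_connectedComponentIn hw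
  by_contra! h
  refine ha.2 (hCUV (hVc.subset_of_closure_inter_subset (hU.inter hV).connectedComponentIn
    ⟨w, hw.2, hwC⟩ ?_ ha.1)).1
  rintro p ⟨hpC, hpV⟩
  have hpU : p ∈ U := by_contra fun hpU => h p ⟨hpV, hpU⟩ hpC
  have hpreconn : IsPreconnected (insert p C) :=
    isPreconnected_connectedComponentIn.subset_closure (t := insert p C) (subset_insert p C)
      (insert_subset hpC subset_closure)
  have hpCUV : insert p C ⊆ U ∩ V := insert_subset ⟨hpU, hpV⟩ hCUV
  exact hpreconn.subset_connectedComponentIn (mem_insert_of_mem p hwC) hpCUV (mem_insert p C)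

theorem ball_subset_connectedComponentIn {E : Type*} [SeminormedAddCommGroup E] [NormedSpace ℝ E]
    {s : Set E} {c w : E} {r : ℝ} (hc : c ∈ connectedComponentIn s w) (hs : ball c r ⊆ s) :
    ball c r ⊆ connectedComponentIn s w := by
  rcases le_or_gt r 0 with hr | hr
  · simp only [ball_eq_empty.2 hr, empty_subset]
  · rw [connectedComponentIn_eq hc]
    exact (convex_ball c r).isPreconnected.subset_connectedComponentIn (mem_ball_self hr) hs

theorem not_ball_infDist_compl_subset_of_isCompact {E : Type*} [SeminormedAddCommGroup E]
    [NormedSpace ℝ E] {U K : Set E} (hU : IsOpen U) (hne : Uᶜ.Nonempty) (hK : IsCompact K)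
    (hKU : K ⊆ U) {c : E} (hc : c ∈ U) : ¬ ball c (infDist c Uᶜ) ⊆ K := by
  intro hball
  have hpos : 0 < infDist c Uᶜ :=
    (hU.isClosed_compl.notMem_iff_infDist_pos hne).1 (not_not_intro hc)
  obtain ⟨δ, hδ, hδU⟩ := hK.exists_thickening_subset_open hU hKU
  have hbig : ball c (δ + infDist c Uᶜ) ⊆ U := calc
    ball c (δ + infDist c Uᶜ) = thickening δ (ball c (infDist c Uᶜ)) :=
      (thickening_ball hδ hpos c).symm
    _ ⊆ thickening δ K := thickening_subset_of_subset δ hball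
    _ ⊆ U := hδU
  have hle : δ + infDist c Uᶜ ≤ infDist c Uᶜ :=
    (le_infDist hne).2 fun y hy => not_lt.1 fun hlt => hy (hbig (mem_ball'.2 hlt))
  linarith

theorem exists_eq_one_norm_lt_of_notMem_holConvexHull {n : ℕ} {U K : Set (Fin n → ℂ)}
    (hKU : K ⊆ U) (hK : IsCompact K) {z : Fin n → ℂ} (hzU : z ∈ U)
    (hz : z ∉ holConvexHull U K) {ε : ℝ} (hε : 0 < ε) :
    ∃ p : (Fin n → ℂ) → ℂ, DifferentiableOn ℂ p U ∧ p z = 1 ∧ ∀ w ∈ K, ‖p w‖ < ε := by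
  obtain ⟨f, hf, hfz⟩ : ∃ f : (Fin n → ℂ) → ℂ, DifferentiableOn ℂ f U ∧
      ⨆ w : K, ‖f w‖ < ‖f z‖ := by
    by_contra! h
    exact hz ⟨hzU, h⟩
  have hpos : 0 < ‖f z‖ := (Real.iSup_nonneg fun _ => norm_nonneg _).trans_lt hfz
  have hbdd : BddAbove (range fun w : K => ‖f w‖) := by
    simpa only [image_eq_range] using
      (hK.image_of_continuousOn (hf.continuousOn.mono hKU).norm).bddAbove
  obtain ⟨m, hm⟩ := exists_pow_lt_of_lt_one hε ((div_lt_one hpos).2 hfz)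
  have hquot : DifferentiableOn ℂ (fun w => f w / f z) U := by
    simpa only [div_eq_mul_inv] using hf.mul_const _
  refine ⟨fun w => (f w / f z) ^ m, hquot.pow m, ?_, fun w hw => ?_⟩
  · simp only [div_self (norm_pos_iff.1 hpos), one_pow]
  · calc ‖(f w / f z) ^ m‖ = (‖f w‖ / ‖f z‖) ^ m := by rw [norm_pow, norm_div]
      _ ≤ ((⨆ w : K, ‖f w‖) / ‖f z‖) ^ m := by gcongr; exact le_ciSup hbdd ⟨w, hw⟩
      _ < ε := hm

theorem HolomorphicallyConvex.peaksOn_holomorphicMaps {n : ℕ} {U B : Set (Fin n → ℂ)}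
    (h : HolomorphicallyConvex U) (hBU : B ⊆ U) (hB : ∀ K ⊆ U, IsCompact K → ¬ B ⊆ K) :
    PeaksOn (holomorphicMaps ℂ U) ((↑) ⁻¹' B) := by
  intro K hK
  have hKU : Subtype.val '' K ⊆ U := Subtype.coe_image_subset U K
  have hK' : IsCompact (Subtype.val '' K) := hK.image continuous_subtype_val
  obtain ⟨z, hzB, hz⟩ := not_subset.1 (hB _ (sep_subset _ _) (h _ hKU hK'))
  refine ⟨⟨z, hBU hzB⟩, hzB, fun ε hε => ?_⟩
  obtain ⟨p, hp, hpz, hpK⟩ :=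
    exists_eq_one_norm_lt_of_notMem_holConvexHull hKU hK' (hBU hzB) hz hε
  exact ⟨⟨U.domRestrict p, hp.continuousOn.domRestrict⟩, ⟨p, hp, rfl⟩, hpz,
    fun x hx => hpK x (mem_image_of_mem _ hx)⟩

theorem HolomorphicallyConvex.exists_forall_not_isBounded_image {n : ℕ} {U : Set (Fin n → ℂ)}
    (h : HolomorphicallyConvex U) (hU : IsOpen U) {ι : Type*} [Countable ι]
    {B : ι → Set (Fin n → ℂ)} (hBU : ∀ i, B i ⊆ U)
    (hB : ∀ i, ∀ K ⊆ U, IsCompact K → ¬ B i ⊆ K) :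
    ∃ f : (Fin n → ℂ) → ℂ, DifferentiableOn ℂ f U ∧ ∀ i, ¬ Bornology.IsBounded (f '' B i) := by
  have : BaireSpace (holomorphicMaps ℂ U) := baireSpace_holomorphicMaps hU
  have hgeneric : ∀ᶠ φ in residual (holomorphicMaps ℂ U),
      ∀ i, ¬ Bornology.IsBounded (φ.1 '' ((↑) ⁻¹' B i)) :=
    eventually_countable_forall.2 fun i =>
      (h.peaksOn_holomorphicMaps (hBU i) (hB i)).eventually_residual_not_isBounded_image
  obtain ⟨⟨φ, f, hf, hfφ⟩, hφ⟩ := (dense_of_mem_residual hgeneric).nonempty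
  refine ⟨f, hf, fun i hi => hφ i ?_⟩
  rwa [← hfφ, domRestrict_eq, image_comp, Subtype.image_preimage_coe, inter_eq_right.2 (hBU i)]

theorem ExtendsHolomorphicallyTo.exists_isOpen_forall_isBounded_image {n : ℕ}
    {U : Set (Fin n → ℂ)} {f : (Fin n → ℂ) → ℂ} {a : Fin n → ℂ} (hU : IsOpen U)
    (hf : DifferentiableOn ℂ f U) (ha : a ∉ U) (hext : ExtendsHolomorphicallyTo U f a) :
    ∃ O ⊆ U, IsOpen O ∧ O.Nonempty ∧
      ∀ c ∈ O, Bornology.IsBounded (f '' ball c (infDist c Uᶜ)) := by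
  obtain ⟨V, hV, hVc, haV, g, hg, W, hW, ⟨w, hw⟩, hWUV, hfg⟩ := hext
  set C := connectedComponentIn (U ∩ V) w
  have hCopen : IsOpen C := (hU.inter hV).connectedComponentIn
  have hCU : C ⊆ U := (connectedComponentIn_subset _ _).trans inter_subset_left
  have hfgC : EqOn f g C := eqOn_connectedComponentIn_of_eventuallyEq hU hV hf hg (hWUV hw)
    (hfg.eventuallyEq_of_mem (hW.mem_nhds hw))
  obtain ⟨p, ⟨hpV, hpU⟩, hpC⟩ := exists_mem_diff_mem_closure_connectedComponentIn hU hV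
    hVc.isPreconnected ⟨haV, ha⟩ (hWUV hw)
  have hgp : ContinuousAt g p := (hg.differentiableAt (hV.mem_nhds hpV)).continuousAt
  obtain ⟨ε, hε, hball⟩ := Metric.mem_nhds_iff.1
    (inter_mem (hV.mem_nhds hpV) (hgp.preimage_mem_nhds (ball_mem_nhds (g p) one_pos)))
  refine ⟨C ∩ ball p (ε / 2), inter_subset_left.trans hCU, hCopen.inter isOpen_ball, ?_, ?_⟩
  · rw [inter_comm]
    exact mem_closure_iff.1 hpC _ isOpen_ball (mem_ball_self (half_pos hε))
  rintro c ⟨hcC, hcp⟩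
  have hBp : ball c (infDist c Uᶜ) ⊆ ball p ε := by
    refine ball_subset_ball' ?_
    linarith [infDist_le_dist_of_mem (x := c) (mem_compl hpU), mem_ball.1 hcp]
  have hBC : ball c (infDist c Uᶜ) ⊆ C := ball_subset_connectedComponentIn hcC
    (subset_inter ball_infDist_compl_subset fun y hy => (hball (hBp hy)).1)
  refine (isBounded_ball (x := g p) (r := 1)).subset ?_
  rintro _ ⟨y, hy, rfl⟩
  rw [hfgC (hBC hy)]
  exact (hball (hBp hy)).2

/-- A holomorphically convex domain is a domain of holomorphy. -/
theorem holomorphicallyConvex_isDomainOfHolomorphy {n : ℕ} (U : Set (Fin n → ℂ))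
    (hUo : IsOpen U) (hUc : IsConnected U) (h : HolomorphicallyConvex U) :
    IsDomainOfHolomorphy U := by
  refine ⟨hUo, hUc, ?_⟩
  rcases Uᶜ.eq_empty_or_nonempty with hempty | hne
  · exact ⟨0, differentiableOn_const 0, by simp [hempty]⟩
  obtain ⟨D, hDcount, hDdense⟩ := TopologicalSpace.exists_countable_dense (Fin n → ℂ)
  have : Countable ↥(D ∩ U) := (hDcount.mono inter_subset_left).to_subtype
  obtain ⟨f, hf, hunbounded⟩ := h.exists_forall_not_isBounded_image hUo
    (B := fun c : ↥(D ∩ U) => ball c.1 (infDist c.1 Uᶜ)) (fun _ => ball_infDist_compl_subset)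
    fun c K hKU hK => not_ball_infDist_compl_subset_of_isCompact hUo hne hK hKU c.2.2
  refine ⟨f, hf, fun a ha hext => ?_⟩
  obtain ⟨O, hOU, hO, hOne, hbounded⟩ := hext.exists_isOpen_forall_isBounded_image hUo hf ha
  obtain ⟨c, hcO, hcD⟩ := hDdense.inter_open_nonempty O hO hOne
  exact hunbounded ⟨c, hcD, hOU hcO⟩ (hbounded c hcO)
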